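/- arXiv:1608.01129 — 2 statements merged into one kernel-verified Lean document; each statement's English description precedes it below -/
import Mathlib

section
/- Let b_n be a uniformly random bridge of length σ_n with σ_n → ∞, and let b_∞ be the uniform infinite bridge (the two-sided random walk with b_∞(0)=0 and i.i.d. increments P(b_∞(i)−b_∞(i−1)=k)=2^{−k−2} for k ∈ ℕ₀∪{−1}, i ≠ 0, and P(−b_∞(−1)=k)=(k+2)2^{−k−3}). If k_n ≤ σ_n and k_n = o(σ_n), then the total variation distance between the law of (b_n(σ_n−k_n),...,b_n(σ_n−1),b_n(0),...,b_n(k_n)) and the law of (b_∞(−k_n),...,b_∞(−1),b_∞(0),...,b_∞(k_n)) tends to 0 as n → ∞. -/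
open Filter

/-- A (discrete) bridge of length `σ`, encoded as a list of `σ+1` integer values:
`b 0 = 0`, each increment lies in `ℕ₀ ∪ {-1}` (i.e. is `≥ -1`), and the final value is `≤ 0`. -/
def IsBridge (σ : ℕ) (b : List ℤ) : Prop :=
  b.length = σ + 1 ∧ b.getD 0 0 = 0 ∧
    (∀ i < σ, -1 ≤ b.getD (i + 1) 0 - b.getD i 0) ∧ b.getD σ 0 ≤ 0

/-- The window `(b(σ-k), ..., b(σ-1), b(0), b(1), ..., b(k))` of a bridge of length `σ`. -/
def windowB (σ k : ℕ) (b : List ℤ) : List ℤ :=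
  ((List.range k).map fun i => b.getD (σ - k + i) 0) ++
    ((List.range (k + 1)).map fun i => b.getD i 0)

/-- Step law of the uniform infinite bridge away from the origin: `P(increment = j) = 2^{-j-2}`
for `j ∈ ℕ₀ ∪ {-1}`. -/
noncomputable def qstep (j : ℤ) : ℝ := if -1 ≤ j then (2 : ℝ) ^ (-j - 2) else 0

/-- Law of `-b_∞(-1)`, i.e. of the step from `b_∞(-1)` to `b_∞(0) = 0`:
`P(-b_∞(-1) = m) = (m+2)·2^{-m-3}` for `m ∈ ℕ₀ ∪ {-1}`. -/
noncomputable def qzero (m : ℤ) : ℝ :=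
  if -1 ≤ m then ((m : ℝ) + 2) * (2 : ℝ) ^ (-m - 3) else 0

/-- The law of the window `(b_∞(-k), ..., b_∞(0), ..., b_∞(k))` of the uniform infinite bridge:
value `0` at position `0` (index `k`), independent increments with law `qstep`, except the
step onto position `0` which has law `qzero`. -/
noncomputable def infBridgeLaw (k : ℕ) (w : List ℤ) : ℝ :=
  if w.length = 2 * k + 1 ∧ w.getD k 0 = 0 then
    ∏ j ∈ Finset.range (2 * k),
      if j = k - 1 then qzero (w.getD (j + 1) 0 - w.getD j 0)
      else qstep (w.getD (j + 1) 0 - w.getD j 0)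
  else 0

/-- The law of the window of a uniformly random bridge of length `σ`. -/
noncomputable def bridgeWindowLaw (σ k : ℕ) (w : List ℤ) : ℝ :=
  (Nat.card {b : List ℤ // IsBridge σ b ∧ windowB σ k b = w} : ℝ) /
    (Nat.card {b : List ℤ // IsBridge σ b} : ℝ)

/-! ### Moments of products of weights -/

theorem HasSum.mul_real {ι κ : Type*} {f : ι → ℝ} {g : κ → ℝ} {s t : ℝ}
    (hf : HasSum f s) (hg : HasSum g t) :
    HasSum (fun x : ι × κ => f x.1 * g x.2) (s * t) :=
  hf.mul hg (summable_mul_of_summable_norm hf.summable.norm hg.summable.norm)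

/-- Total mass, centred first moment and variance of a sum of independent `ℕ`-valued variables. -/
theorem hasSum_prod_moments (n : ℕ) (f : Fin n → ℕ → ℝ) (μ v : Fin n → ℝ)
    (h0 : ∀ i, HasSum (f i) 1) (h1 : ∀ i, HasSum (fun x => f i x * (x - μ i)) 0)
    (h2 : ∀ i, HasSum (fun x => f i x * (x - μ i) ^ 2) (v i)) :
    HasSum (fun y : Fin n → ℕ => ∏ i, f i (y i)) 1 ∧
    HasSum (fun y : Fin n → ℕ => (∏ i, f i (y i)) * (∑ i, (y i : ℝ) - ∑ i, μ i)) 0 ∧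
    HasSum (fun y : Fin n → ℕ => (∏ i, f i (y i)) * (∑ i, (y i : ℝ) - ∑ i, μ i) ^ 2)
      (∑ i, v i) := by
  induction n with
  | zero =>
    refine ⟨?_, ?_, ?_⟩
    · simp
    · simp
    · simp
  | succ n ih =>
    obtain ⟨a0, a1, a2⟩ := ih (fun i => f i.succ) (fun i => μ i.succ) (fun i => v i.succ)
      (fun i => h0 _) (fun i => h1 _) (fun i => h2 _)
    refine ⟨?_, ?_, ?_⟩
    · rw [← (Fin.consEquiv fun _ => ℕ).hasSum_iff]
      convert! (h0 0).mul_real a0 using 1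
      · funext x
        simp [Fin.consEquiv, Fin.prod_univ_succ]
      · simp
    · rw [← (Fin.consEquiv fun _ => ℕ).hasSum_iff]
      convert! ((h1 0).mul_real a0).add ((h0 0).mul_real a1) using 1
      · funext x
        simp [Fin.consEquiv, Fin.prod_univ_succ, Fin.sum_univ_succ]
        ring
      · simp
    · rw [← (Fin.consEquiv fun _ => ℕ).hasSum_iff]
      convert! (((h2 0).mul_real a0).add (((h1 0).mul_real a1).mul_left 2)).add
        ((h0 0).mul_real a2) using 1
      · funext x
        simp [Fin.consEquiv, Fin.prod_univ_succ, Fin.sum_univ_succ]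
        ring
      · simp [Fin.sum_univ_succ]

theorem hasSum_choose_mul_half_pow (k : ℕ) :
    HasSum (fun n : ℕ => ((n + k).choose k : ℝ) * (1 / 2) ^ n) (2 ^ (k + 1)) := by
  convert! hasSum_choose_mul_geometric_of_norm_lt_one k (r := (1 / 2 : ℝ)) (by norm_num) using 1
  rw [one_div, ← inv_pow]
  norm_num

theorem cast_add_two_choose_two (n : ℕ) :
    ((n + 2).choose 2 : ℝ) = (n + 1) * (n + 2) / 2 := by
  rw [Nat.cast_choose_two]
  push_cast
  ring

theorem cast_add_three_choose_three (n : ℕ) :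
    ((n + 3).choose 3 : ℝ) = (n + 1) * (n + 2) * (n + 3) / 6 := by
  have h := Nat.add_one_mul_choose_eq (n + 2) 2
  have h' : ((n : ℝ) + 2 + 1) * ((n + 2).choose 2 : ℝ) = ((n + 3).choose 3 : ℝ) * (2 + 1) := by
    exact_mod_cast h
  rw [cast_add_two_choose_two] at h'
  linarith

theorem geometric_half_moments :
    HasSum (fun x : ℕ => (1 / 2 : ℝ) ^ (x + 1)) 1 ∧
    HasSum (fun x : ℕ => (1 / 2 : ℝ) ^ (x + 1) * (x - 1)) 0 ∧
    HasSum (fun x : ℕ => (1 / 2 : ℝ) ^ (x + 1) * (x - 1) ^ 2) 2 := by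
  have c0 := hasSum_choose_mul_half_pow 0
  have c1 := hasSum_choose_mul_half_pow 1
  have c2 := hasSum_choose_mul_half_pow 2
  simp only [cast_add_two_choose_two, Nat.choose_one_right, Nat.choose_zero_right] at c0 c1 c2
  refine ⟨?_, ?_, ?_⟩
  · convert! c0.mul_left (1 / 2) using 1
    · funext x; push_cast; ring
    · norm_num
  · convert! (c1.mul_left (1 / 2)).sub (c0.mul_left 1) using 1
    · funext x; push_cast; ring
    · norm_num
  · convert! ((c2.mul_left 1).sub (c1.mul_left (5 / 2))).add (c0.mul_left 2) using 1
    · funext x; push_cast; ring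
    · norm_num

theorem size_biased_geometric_half_moments :
    HasSum (fun x : ℕ => ((x : ℝ) + 1) * (1 / 2 : ℝ) ^ (x + 2)) 1 ∧
    HasSum (fun x : ℕ => ((x : ℝ) + 1) * (1 / 2 : ℝ) ^ (x + 2) * (x - 2)) 0 ∧
    HasSum (fun x : ℕ => ((x : ℝ) + 1) * (1 / 2 : ℝ) ^ (x + 2) * (x - 2) ^ 2) 4 := by
  have c1 := hasSum_choose_mul_half_pow 1
  have c2 := hasSum_choose_mul_half_pow 2
  have c3 := hasSum_choose_mul_half_pow 3
  simp only [cast_add_two_choose_two, cast_add_three_choose_three, Nat.choose_one_right]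
    at c1 c2 c3
  refine ⟨?_, ?_, ?_⟩
  · convert! c1.mul_left (1 / 4) using 1
    · funext x; push_cast; ring
    · norm_num
  · convert! (c2.mul_left (1 / 2)).sub (c1.mul_left 1) using 1
    · funext x; push_cast; ring
    · norm_num
  · convert! ((c3.mul_left (3 / 2)).sub (c2.mul_left (9 / 2))).add (c1.mul_left 4) using 1
    · funext x; push_cast; ring
    · norm_num

/-! ### Binomial coefficients -/

theorem centralBinom_add_le (n s : ℕ) :
    (n + s).centralBinom ≤ 4 ^ s * n.centralBinom := by
  induction s with
  | zero => simp
  | succ s ih =>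
    have h := Nat.succ_mul_centralBinom_succ (n + s)
    have h' : (n + s + 1) * (n + s + 1).centralBinom
        ≤ (n + s + 1) * (4 * (n + s).centralBinom) := by
      rw [h]; nlinarith [Nat.zero_le (n + s).centralBinom]
    have := Nat.le_of_mul_le_mul_left h' (by omega)
    rw [← add_assoc, pow_succ]
    linarith

theorem two_pow_mul_choose_ge (n : ℕ) (L : ℝ) (hL : 0 < L) (d : ℕ) (hd : d ≤ n)
    (hdL : L ≤ 2 * n - d) :
    (1 - (d : ℝ) ^ 2 / L) * n.centralBinom ≤ 2 ^ d * ((n + (n - d)).choose n : ℝ) := by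
  induction d with
  | zero => simp [Nat.centralBinom, two_mul]
  | succ d ih =>
    push_cast at hdL
    have ih := ih (by omega) (by linarith)
    have hc := Nat.choose_mul_succ_eq (n + (n - (d + 1))) n
    have e : n + (n - (d + 1)) + 1 = n + (n - d) := by omega
    rw [e] at hc
    have e2 : n + (n - d) - n = n - d := by omega
    rw [e2] at hc
    have hc' : ((n + (n - (d + 1))).choose n : ℝ) * (n + (n - d)) =
        ((n + (n - d)).choose n : ℝ) * (n - d) := by
      have := congrArg (Nat.cast (R := ℝ)) hc
      push_cast [Nat.cast_sub (show d ≤ n by omega)] at this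
      exact this
    by_cases hneg : 1 - (d : ℝ) ^ 2 / L < 0
    · have : 1 - ((d + 1 : ℕ) : ℝ) ^ 2 / L ≤ 0 := by
        have : (d : ℝ) ^ 2 / L ≤ ((d + 1 : ℕ) : ℝ) ^ 2 / L := by
          gcongr
          exact Nat.le_succ d
        linarith
      refine (mul_nonpos_of_nonpos_of_nonneg this (by positivity)).trans (by positivity)
    · push Not at hneg
      have hD : 0 < (n : ℝ) + (n - d) := by linarith
      have hr : 2 * ((n + (n - (d + 1))).choose n : ℝ) =
          (1 - d / ((n : ℝ) + (n - d))) * ((n + (n - d)).choose n : ℝ) := by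
        field_simp
        linarith
      have hdn : (d : ℝ) ≤ n := by exact_mod_cast (show d ≤ n by omega)
      have hq : (d : ℝ) / ((n : ℝ) + (n - d)) ≤ d / L := by
        gcongr
        linarith
      have hq1 : 0 ≤ 1 - (d : ℝ) / ((n : ℝ) + (n - d)) := by
        rw [sub_nonneg, div_le_one hD]
        have : (d : ℝ) + 1 ≤ n := by exact_mod_cast hd
        linarith
      have key : 1 - ((d + 1 : ℕ) : ℝ) ^ 2 / L
          ≤ (1 - (d : ℝ) / ((n : ℝ) + (n - d))) * (1 - (d : ℝ) ^ 2 / L) := by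
        have h1 : (1 - (d : ℝ) / L) * (1 - (d : ℝ) ^ 2 / L) ≤
          (1 - (d : ℝ) / ((n : ℝ) + (n - d))) * (1 - (d : ℝ) ^ 2 / L) := by
          gcongr
        refine le_trans ?_ h1
        push_cast
        have h2 : ((d : ℝ) + 1) ^ 2 / L = (d : ℝ) ^ 2 / L + d / L + (d + 1) / L := by
          field_simp
        have h3 : 0 ≤ (d : ℝ) / L * ((d : ℝ) ^ 2 / L) := by positivity
        have h4 : 0 ≤ ((d : ℝ) + 1) / L := by positivity
        rw [h2]
        nlinarith
      calc _ ≤ (1 - (d : ℝ) / ((n : ℝ) + (n - d))) * (1 - (d : ℝ) ^ 2 / L) * n.centralBinom := by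
            gcongr
        _ = (1 - (d : ℝ) / ((n : ℝ) + (n - d))) * ((1 - (d : ℝ) ^ 2 / L) * n.centralBinom) := by
            ring
        _ ≤ (1 - (d : ℝ) / ((n : ℝ) + (n - d))) * (2 ^ d * ((n + (n - d)).choose n : ℝ)) := by
            gcongr
        _ = _ := by
            rw [pow_succ, mul_assoc (2 ^ d : ℝ) 2, hr]; ring

/-- Drawing without replacement from an urn with `σ` balls of each colour, compared with
fair coin tossing. -/
theorem two_pow_mul_choose_sub_ge (σ t m : ℕ) (ht : t ≤ σ) (hm : 2 * m ≤ σ) (hσ : 0 < σ) :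
    (1 - 2 * ((t : ℝ) - m) ^ 2 / σ) * σ.centralBinom ≤
      2 ^ (t + m) * (((σ - t) + (σ - m)).choose (σ - t) : ℝ) := by
  have hσ' : (0 : ℝ) < σ := by exact_mod_cast hσ
  have htr : (t : ℝ) ≤ σ := by exact_mod_cast ht
  have hmr : 2 * (m : ℝ) ≤ σ := by exact_mod_cast hm
  have aux : ∀ s d : ℕ, s + d ≤ σ →
      (σ : ℝ) / 2 ≤ 2 * ((σ - s : ℕ) : ℝ) - d →
      (1 - 2 * (d : ℝ) ^ 2 / σ) * σ.centralBinom ≤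
      2 ^ (s + (s + d)) * (((σ - s) + (σ - (s + d))).choose (σ - s) : ℝ) := by
    intro s d hsd h
    have h1 := two_pow_mul_choose_ge (σ - s) ((σ : ℝ) / 2) (by positivity) d (by omega) h
    have h2 := centralBinom_add_le (σ - s) s
    rw [Nat.sub_add_cancel (by omega)] at h2
    have h2' : (σ.centralBinom : ℝ) ≤ 4 ^ s * (σ - s).centralBinom := by exact_mod_cast h2
    have e : (d : ℝ) ^ 2 / ((σ : ℝ) / 2) = 2 * (d : ℝ) ^ 2 / σ := by field_simp
    rw [e, Nat.sub_sub] at h1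
    have e4 : (2 : ℝ) ^ (s + (s + d)) = 4 ^ s * 2 ^ d := by
      rw [← add_assoc, pow_add, ← two_mul, pow_mul]; norm_num
    rw [e4, mul_assoc]
    by_cases hneg : 1 - 2 * (d : ℝ) ^ 2 / σ < 0
    · exact (mul_nonpos_of_nonpos_of_nonneg hneg.le (by positivity)).trans (by positivity)
    · push Not at hneg
      calc _ ≤ (1 - 2 * (d : ℝ) ^ 2 / σ) * (4 ^ s * (σ - s).centralBinom) := by gcongr
        _ = 4 ^ s * ((1 - 2 * (d : ℝ) ^ 2 / σ) * (σ - s).centralBinom) := by ring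
        _ ≤ _ := by gcongr
  rcases le_total t m with h | h
  · obtain ⟨d, rfl⟩ := Nat.exists_eq_add_of_le h
    convert! aux t d (by omega) (by push_cast [Nat.cast_sub ht] at *; linarith)
      using 3
    push_cast; ring
  · obtain ⟨d, rfl⟩ := Nat.exists_eq_add_of_le h
    have := aux m d (by omega)
      (by push_cast [Nat.cast_sub (show m ≤ σ by omega)] at *; linarith)
    convert! this using 3
    · push_cast; ring
    · ring
    · rw [add_comm (σ - (m + d)), Nat.choose_symm_add]

theorem natCard_fin_sum_eq (n s : ℕ) :
    Nat.card {y : Fin n → ℕ // ∑ i, y i = s} = n.multichoose s := by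
  rw [← Nat.card_congr (Sym.equivNatSumOfFintype (Fin n) s), Sym.natCard_sym_eq_multichoose]
  simp

/-! ### Walks and bridges -/

/-- The walk started at `0` with increments `z j - 1`. -/
def walk (z : ℕ → ℕ) (i : ℕ) : ℤ := ∑ j ∈ Finset.range i, ((z j : ℤ) - 1)

theorem walk_succ (z : ℕ → ℕ) (i : ℕ) : walk z (i + 1) = walk z i + (z i - 1) :=
  Finset.sum_range_succ _ _

theorem walk_add (z : ℕ → ℕ) (m i : ℕ) :
    walk z (m + i) = walk z m + walk (fun j => z (m + j)) i :=
  Finset.sum_range_add _ _ _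

theorem walk_congr {z z' : ℕ → ℕ} {i : ℕ} (h : ∀ j < i, z j = z' j) : walk z i = walk z' i :=
  Finset.sum_congr rfl fun j hj => by rw [h j (Finset.mem_range.1 hj)]

theorem eq_of_walk_eq {z z' : ℕ → ℕ} {n : ℕ} (h : ∀ i ≤ n, walk z i = walk z' i) {j : ℕ}
    (hj : j < n) : z j = z' j := by
  have h1 := h (j + 1) hj
  rw [walk_succ, walk_succ, h j hj.le] at h1
  omega

theorem walk_eq_of_steps {z : ℕ → ℕ} {u : ℕ → ℤ} {n : ℕ}
    (h : ∀ j < n, u (j + 1) - u j = z j - 1) {i : ℕ} (hi : i ≤ n) : walk z i = u i - u 0 := by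
  induction i with
  | zero => simp [walk]
  | succ i ih =>
    have := h i hi
    rw [walk_succ, ih (by omega)]
    omega

/-- Extension of a finite tuple by zeros. -/
def zeroExtend {n : ℕ} (y : Fin n → ℕ) (j : ℕ) : ℕ := if h : j < n then y ⟨j, h⟩ else 0

theorem zeroExtend_val {n : ℕ} (y : Fin n → ℕ) (j : Fin n) : zeroExtend y j = y j := by
  simp [zeroExtend]

theorem zeroExtend_of_lt {n : ℕ} (y : Fin n → ℕ) {j : ℕ} (h : j < n) :
    zeroExtend y j = y ⟨j, h⟩ := by
  simp [zeroExtend, h]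

theorem walk_zeroExtend {n : ℕ} (y : Fin n → ℕ) :
    walk (zeroExtend y) n = ((∑ i, y i : ℕ) : ℤ) - n := by
  simp [walk, Finset.sum_range, zeroExtend_val]

theorem getD_map_range (f : ℕ → ℤ) {n i : ℕ} (h : i < n) :
    ((List.range n).map f).getD i 0 = f i := by
  simp [List.getD_eq_getElem?_getD, h]

theorem eq_map_range_getD {l : List ℤ} {n : ℕ} (h : l.length = n) :
    l = (List.range n).map fun i => l.getD i 0 := by
  subst h
  refine List.ext_getElem (by simp) fun i h1 h2 => ?_
  simp [List.getD_eq_getElem?_getD, h1]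

theorem ext_of_getD {l l' : List ℤ} {n : ℕ} (h : l.length = n) (h' : l'.length = n)
    (H : ∀ i < n, l.getD i 0 = l'.getD i 0) : l = l' := by
  rw [eq_map_range_getD h, eq_map_range_getD h']
  exact List.map_congr_left fun i hi => H i (List.mem_range.1 hi)

/-- The excesses of the increments of a bridge over `-1`, followed by minus its final value. -/
def bridgeSteps (σ : ℕ) (b : List ℤ) (j : Fin (σ + 1)) : ℕ :=
  if (j : ℕ) < σ then (b.getD (j + 1) 0 - b.getD j 0 + 1).toNat else (-b.getD σ 0).toNat

theorem IsBridge.sub_eq {σ : ℕ} {b : List ℤ} (hb : IsBridge σ b) {j : ℕ} (hj : j < σ) :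
    b.getD (j + 1) 0 - b.getD j 0 = zeroExtend (bridgeSteps σ b) j - 1 := by
  rw [zeroExtend_of_lt _ (show j < σ + 1 by omega), bridgeSteps, if_pos hj]
  have := hb.2.2.1 j hj
  simp only
  omega

theorem IsBridge.walk_eq {σ : ℕ} {b : List ℤ} (hb : IsBridge σ b) {i : ℕ} (hi : i ≤ σ) :
    walk (zeroExtend (bridgeSteps σ b)) i = b.getD i 0 := by
  rw [walk_eq_of_steps (u := fun i => b.getD i 0) (fun j hj => hb.sub_eq hj) hi, hb.2.1, sub_zero]

theorem IsBridge.sum_bridgeSteps {σ : ℕ} {b : List ℤ} (hb : IsBridge σ b) :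
    ∑ i, bridgeSteps σ b i = σ := by
  have h1 := walk_zeroExtend (bridgeSteps σ b)
  rw [walk_succ, hb.walk_eq le_rfl, zeroExtend_of_lt _ (show σ < σ + 1 by omega)] at h1
  have h2 : bridgeSteps σ b ⟨σ, by omega⟩ = (-b.getD σ 0).toNat := by simp [bridgeSteps]
  have := hb.2.2.2
  rw [h2] at h1
  push_cast at h1
  rw [Int.toNat_of_nonneg (by omega)] at h1
  have : ((∑ i, bridgeSteps σ b i : ℕ) : ℤ) = σ := by push_cast; omega
  exact_mod_cast this

/-- A bridge of length `σ` seen as a composition of `σ` into `σ + 1` parts. -/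
def bridgeToSteps (σ : ℕ) (b : {b : List ℤ // IsBridge σ b}) :
    {y : Fin (σ + 1) → ℕ // ∑ i, y i = σ} :=
  ⟨bridgeSteps σ b, b.2.sum_bridgeSteps⟩

theorem bridgeToSteps_injective (σ : ℕ) : Function.Injective (bridgeToSteps σ) := by
  rintro ⟨b, hb⟩ ⟨b', hb'⟩ h
  have h' : bridgeSteps σ b = bridgeSteps σ b' := congrArg Subtype.val h
  refine Subtype.ext (ext_of_getD hb.1 hb'.1 fun i hi => ?_)
  rw [← hb.walk_eq (by omega), ← hb'.walk_eq (by omega), h']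

instance finite_fin_sum_eq (n s : ℕ) : Finite {y : Fin n → ℕ // ∑ i, y i = s} :=
  Finite.of_equiv _ (Sym.equivNatSumOfFintype (Fin n) s)

instance finite_isBridge (σ : ℕ) : Finite {b : List ℤ // IsBridge σ b} :=
  Finite.of_injective _ (bridgeToSteps_injective σ)

theorem natCard_isBridge_le (σ : ℕ) :
    Nat.card {b : List ℤ // IsBridge σ b} ≤ σ.centralBinom := by
  refine (Nat.card_le_card_of_injective _ (bridgeToSteps_injective σ)).trans_eq ?_
  rw [natCard_fin_sum_eq, Nat.multichoose_eq, Nat.centralBinom]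
  congr 1
  omega

theorem natCard_isBridge_pos (σ : ℕ) : 0 < Nat.card {b : List ℤ // IsBridge σ b} := by
  have : Nonempty {b : List ℤ // IsBridge σ b} :=
    ⟨⟨(List.range (σ + 1)).map fun _ => 0, by simp, by simp, fun i hi => by
      rw [getD_map_range _ (by omega), getD_map_range _ (by omega)]; simp, by
      rw [getD_map_range _ (by omega)]⟩⟩
  exact Nat.card_pos

theorem hasSum_bridgeWindowLaw (σ k : ℕ) : HasSum (bridgeWindowLaw σ k) 1 := by
  classical
  have : Fintype {b : List ℤ // IsBridge σ b} := Fintype.ofFinite _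
  have hpos : (Nat.card {b : List ℤ // IsBridge σ b} : ℝ) ≠ 0 := by
    exact_mod_cast (natCard_isBridge_pos σ).ne'
  have h : ∀ w, (Nat.card {b : List ℤ // IsBridge σ b ∧ windowB σ k b = w} : ℝ) =
      ∑ b : {b : List ℤ // IsBridge σ b}, if w = windowB σ k b then (1 : ℝ) else 0 := by
    intro w
    rw [Finset.sum_boole, ← Nat.card_congr (Equiv.subtypeSubtypeEquivSubtypeInter
      (fun b => IsBridge σ b) (fun b => windowB σ k b = w)), Nat.card_eq_fintype_card,
      Fintype.card_subtype]
    simp only [eq_comm]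
  have hs : HasSum (fun w => ∑ b : {b : List ℤ // IsBridge σ b},
      if w = windowB σ k b then (1 : ℝ) else 0) (∑ _b : {b : List ℤ // IsBridge σ b}, (1 : ℝ)) :=
    hasSum_sum fun b _ => hasSum_ite_eq (windowB σ k b) (1 : ℝ)
  convert! hs.div_const (Nat.card {b : List ℤ // IsBridge σ b} : ℝ) using 1
  · funext w
    rw [bridgeWindowLaw, h]
  · rw [Finset.sum_const, Finset.card_univ, ← Nat.card_eq_fintype_card, nsmul_one, div_self hpos]

theorem bridgeWindowLaw_nonneg (σ k : ℕ) (w : List ℤ) : 0 ≤ bridgeWindowLaw σ k w := by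
  unfold bridgeWindowLaw; positivity

/-! ### Windows of the uniform infinite bridge -/

/-- The window of radius `k` with increments `y i - 1` and value `0` at the central index. -/
def windowOfSteps (k : ℕ) (y : Fin (2 * k) → ℕ) : List ℤ :=
  (List.range (2 * k + 1)).map fun i => walk (zeroExtend y) i - walk (zeroExtend y) k

/-- Law of the `i`-th increment of the window of the uniform infinite bridge, shifted to `ℕ`. -/
noncomputable def stepWeight (k : ℕ) (i : Fin (2 * k)) (x : ℕ) : ℝ :=
  if (i : ℕ) = k - 1 then ((x : ℝ) + 1) * (1 / 2) ^ (x + 2) else (1 / 2) ^ (x + 1)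

theorem qstep_sub_one (x : ℕ) : qstep (x - 1) = (1 / 2) ^ (x + 1) := by
  rw [qstep, if_pos (by omega), show -((x : ℤ) - 1) - 2 = -((x + 1 : ℕ) : ℤ) by push_cast; ring,
    zpow_neg, zpow_natCast, one_div, inv_pow]

theorem qzero_sub_one (x : ℕ) : qzero (x - 1) = ((x : ℝ) + 1) * (1 / 2) ^ (x + 2) := by
  rw [qzero, if_pos (by omega), show -((x : ℤ) - 1) - 3 = -((x + 2 : ℕ) : ℤ) by push_cast; ring,
    zpow_neg, zpow_natCast, one_div, inv_pow]
  push_cast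
  ring

theorem getD_windowOfSteps {k : ℕ} (y : Fin (2 * k) → ℕ) {i : ℕ} (hi : i ≤ 2 * k) :
    (windowOfSteps k y).getD i 0 = walk (zeroExtend y) i - walk (zeroExtend y) k :=
  getD_map_range _ (by omega)

theorem infBridgeLaw_windowOfSteps (k : ℕ) (y : Fin (2 * k) → ℕ) :
    infBridgeLaw k (windowOfSteps k y) = ∏ i, stepWeight k i (y i) := by
  rw [infBridgeLaw, if_pos, Finset.prod_range]
  · refine Finset.prod_congr rfl fun i _ => ?_
    have hi := i.2
    rw [getD_windowOfSteps y (by omega), getD_windowOfSteps y (by omega), walk_succ,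
      zeroExtend_val, stepWeight, ← qzero_sub_one, ← qstep_sub_one]
    congr 2 <;> ring
  · refine ⟨by simp [windowOfSteps], ?_⟩
    rw [getD_windowOfSteps y (by omega), sub_self]

theorem windowOfSteps_injective (k : ℕ) : Function.Injective (windowOfSteps k) := by
  intro y y' h
  have h1 : ∀ i ≤ 2 * k, walk (zeroExtend y) i - walk (zeroExtend y) k =
      walk (zeroExtend y') i - walk (zeroExtend y') k := fun i hi => by
    rw [← getD_windowOfSteps y hi, ← getD_windowOfSteps y' hi, h]
  have h0 := h1 0 (by omega)
  simp only [walk, Finset.range_zero, Finset.sum_empty] at h0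
  have h2 : ∀ i ≤ 2 * k, walk (zeroExtend y) i = walk (zeroExtend y') i := fun i hi => by
    have := h1 i hi
    simp only [walk] at this ⊢
    omega
  funext j
  rw [← zeroExtend_val y, ← zeroExtend_val y', eq_of_walk_eq h2 j.2]

theorem infBridgeLaw_eq_zero {k : ℕ} {w : List ℤ} (hw : w ∉ Set.range (windowOfSteps k)) :
    infBridgeLaw k w = 0 := by
  rw [infBridgeLaw]
  split_ifs with h
  · by_contra hne
    rw [← ne_eq, Finset.prod_ne_zero_iff] at hne
    refine hw ⟨fun i => (w.getD (i + 1) 0 - w.getD i 0 + 1).toNat, ?_⟩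
    set y : Fin (2 * k) → ℕ := fun i => (w.getD (i + 1) 0 - w.getD i 0 + 1).toNat with hy
    have hstep : ∀ j < 2 * k, w.getD (j + 1) 0 - w.getD j 0 = zeroExtend y j - 1 := by
      intro j hj
      have := hne j (Finset.mem_range.2 hj)
      have h1 : -1 ≤ w.getD (j + 1) 0 - w.getD j 0 := by
        by_contra hlt
        split_ifs at this
        · exact this (by rw [qzero, if_neg hlt])
        · exact this (by rw [qstep, if_neg hlt])
      rw [zeroExtend_of_lt y hj, hy]
      simp only
      omega
    have hwalk : ∀ i ≤ 2 * k, walk (zeroExtend y) i = w.getD i 0 - w.getD 0 0 := fun i hi =>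
      walk_eq_of_steps (u := fun i => w.getD i 0) hstep hi
    refine ext_of_getD (n := 2 * k + 1) (by simp [windowOfSteps]) h.1 fun i hi => ?_
    rw [getD_windowOfSteps y (by omega), hwalk i (by omega), hwalk k (by omega), h.2]
    ring
  · rfl

theorem prod_stepWeight {k : ℕ} (hk : 0 < k) (y : Fin (2 * k) → ℕ) :
    ∏ i, stepWeight k i (y i) =
      ((y ⟨k - 1, by omega⟩ : ℝ) + 1) * (1 / 2) ^ (∑ i, y i + (2 * k + 1)) := by
  have h : ∀ i : Fin (2 * k), stepWeight k i (y i) =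
      (if i = ⟨k - 1, by omega⟩ then ((y i : ℝ) + 1) / 2 else 1) * (1 / 2) ^ (y i + 1) := by
    intro i
    simp only [stepWeight, Fin.ext_iff]
    split_ifs <;> ring
  rw [Finset.prod_congr rfl fun i _ => h i, Finset.prod_mul_distrib, Finset.prod_ite_eq' _ _
    (fun i => ((y i : ℝ) + 1) / 2), if_pos (Finset.mem_univ _), Finset.prod_pow_eq_pow_sum,
    Finset.sum_add_distrib]
  simp only [Finset.sum_const, Finset.card_univ, Fintype.card_fin, smul_eq_mul, mul_one]
  ring

theorem hasSum_stepWeight_moments {k : ℕ} (hk : 0 < k) :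
    HasSum (fun y : Fin (2 * k) → ℕ => ∏ i, stepWeight k i (y i)) 1 ∧
    HasSum (fun y : Fin (2 * k) → ℕ => (∏ i, stepWeight k i (y i)) *
      (((∑ i, y i : ℕ) : ℝ) - (2 * k + 1 : ℕ)) ^ 2) (4 * k + 2) := by
  obtain ⟨g0, g1, g2⟩ := geometric_half_moments
  obtain ⟨z0, z1, z2⟩ := size_biased_geometric_half_moments
  have key := hasSum_prod_moments (2 * k) (stepWeight k)
    (fun i => if i = ⟨k - 1, by omega⟩ then 2 else 1)
    (fun i => if i = ⟨k - 1, by omega⟩ then 4 else 2) ?_ ?_ ?_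
  · refine ⟨key.1, ?_⟩
    have h1 : ∑ i : Fin (2 * k), (if i = ⟨k - 1, by omega⟩ then (2 : ℝ) else 1) = 2 * k + 1 := by
      have : ∀ i : Fin (2 * k), (if i = ⟨k - 1, by omega⟩ then (2 : ℝ) else 1) =
        1 + if i = ⟨k - 1, by omega⟩ then 1 else 0 := fun i => by split_ifs <;> norm_num
      rw [Finset.sum_congr rfl fun i _ => this i, Finset.sum_add_distrib]
      simp
    have h2 : ∑ i : Fin (2 * k), (if i = ⟨k - 1, by omega⟩ then (4 : ℝ) else 2) = 4 * k + 2 := by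
      have : ∀ i : Fin (2 * k), (if i = ⟨k - 1, by omega⟩ then (4 : ℝ) else 2) =
        2 + if i = ⟨k - 1, by omega⟩ then 2 else 0 := fun i => by split_ifs <;> norm_num
      rw [Finset.sum_congr rfl fun i _ => this i, Finset.sum_add_distrib]
      simp
      ring
    have := key.2.2
    rw [h1, h2] at this
    push_cast
    exact this
  all_goals
    intro i
    by_cases hi : (i : ℕ) = k - 1
    · have e : stepWeight k i = fun x : ℕ => ((x : ℝ) + 1) * (1 / 2) ^ (x + 2) :=
        funext fun x => if_pos hi
      simp only [e, Fin.ext_iff, hi, if_true]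
      assumption
    · have e : stepWeight k i = fun x : ℕ => (1 / 2 : ℝ) ^ (x + 1) := funext fun x => if_neg hi
      simp only [e, Fin.ext_iff, hi, if_false]
      assumption

theorem hasSum_infBridgeLaw_mul_iff {k : ℕ} (F : List ℤ → ℝ) (s : ℝ) :
    HasSum (fun w => infBridgeLaw k w * F w) s ↔
      HasSum (fun y => (∏ i, stepWeight k i (y i)) * F (windowOfSteps k y)) s := by
  rw [← (windowOfSteps_injective k).hasSum_iff]
  · simp only [Function.comp_def, infBridgeLaw_windowOfSteps]
  · intro w hw
    rw [infBridgeLaw_eq_zero hw, zero_mul]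

/-! ### Bridges with a prescribed window -/

/-- The steps of a bridge with prescribed window steps `z`, middle steps `g` and last step `a`. -/
def gluedSteps (σ k : ℕ) (z g : ℕ → ℕ) (a j : ℕ) : ℕ :=
  if j < k then z (k + j) else if j < σ - k then g (j - k) else
    if j < σ - 1 then z (j - (σ - k)) else a

section Glue

variable {σ k : ℕ} (z g : ℕ → ℕ) (a : ℕ)

theorem walk_gluedSteps_left {i : ℕ} (hi : i ≤ k) :
    walk (gluedSteps σ k z g a) i = walk z (k + i) - walk z k := by
  rw [walk_add, add_sub_cancel_left]
  refine walk_congr fun j hj => ?_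
  rw [gluedSteps, if_pos (by omega)]

theorem walk_gluedSteps_middle {i : ℕ} (hi : k + i ≤ σ - k) :
    walk (gluedSteps σ k z g a) (k + i) = walk z (k + k) - walk z k + walk g i := by
  rw [walk_add, walk_gluedSteps_left z g a le_rfl]
  congr 1
  refine walk_congr fun j hj => ?_
  rw [gluedSteps, if_neg (by omega), if_pos (by omega), Nat.add_sub_cancel_left]

theorem walk_gluedSteps_right (hkσ : 2 * k < σ) (hg : walk z (k + k) + walk g (σ - 2 * k) = 0)
    {i : ℕ} (hi : i < k) :
    walk (gluedSteps σ k z g a) (σ - k + i) = walk z i - walk z k := by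
  have h1 := walk_gluedSteps_middle z g a (show k + (σ - 2 * k) ≤ σ - k by omega)
  rw [show k + (σ - 2 * k) = σ - k by omega] at h1
  have h2 : walk (fun j => gluedSteps σ k z g a (σ - k + j)) i = walk z i :=
    walk_congr fun j hj => by
      rw [gluedSteps, if_neg (by omega), if_neg (by omega), if_pos (by omega),
        Nat.add_sub_cancel_left]
  rw [walk_add, h1, h2]
  omega

theorem walk_gluedSteps_last (hk : 0 < k) (hkσ : 2 * k < σ)
    (hg : walk z (k + k) + walk g (σ - 2 * k) = 0) :
    walk (gluedSteps σ k z g a) σ = a - z (k - 1) := by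
  have h1 := walk_gluedSteps_right z g a hkσ hg (show k - 1 < k by omega)
  have h2 := walk_succ (gluedSteps σ k z g a) (σ - 1)
  have h3 : gluedSteps σ k z g a (σ - 1) = a := by
    rw [gluedSteps, if_neg (by omega), if_neg (by omega), if_neg (by omega)]
  have h4 := walk_succ z (k - 1)
  rw [show σ - k + (k - 1) = σ - 1 by omega] at h1
  rw [show σ - 1 + 1 = σ by omega] at h2
  rw [show k - 1 + 1 = k by omega] at h4
  rw [h2, h1, h3, h4]
  ring

end Glue

theorem isBridge_map_walk {σ : ℕ} {x : ℕ → ℕ} (h : walk x σ ≤ 0) :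
    IsBridge σ ((List.range (σ + 1)).map (walk x)) := by
  refine ⟨by simp, ?_, fun i hi => ?_, ?_⟩
  · rw [getD_map_range _ (by omega)]; simp [walk]
  · rw [getD_map_range _ (by omega), getD_map_range _ (by omega), walk_succ]; omega
  · rwa [getD_map_range _ (by omega)]

theorem windowB_map_walk {σ k : ℕ} (hkσ : 2 * k < σ) (x z : ℕ → ℕ)
    (hl : ∀ i ≤ k, walk x i = walk z (k + i) - walk z k)
    (hr : ∀ i < k, walk x (σ - k + i) = walk z i - walk z k) :
    windowB σ k ((List.range (σ + 1)).map (walk x)) =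
      (List.range (2 * k + 1)).map fun i => walk z i - walk z k := by
  have e : List.range (2 * k + 1) = List.range k ++ (List.range (k + 1)).map (k + ·) := by
    rw [← List.range_add]
    congr 1
    ring
  rw [e, List.map_append, List.map_map, windowB]
  congr 1
  · refine List.map_congr_left fun i hi => ?_
    have := List.mem_range.1 hi
    rw [getD_map_range _ (by omega), hr i this]
  · refine List.map_congr_left fun i hi => ?_
    have := List.mem_range.1 hi
    rw [getD_map_range _ (by omega), hl i (by omega)]
    rfl

theorem natCard_bridges_with_window_ge {σ k : ℕ} (hk : 0 < k) (hkσ : 2 * k < σ)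
    (y : Fin (2 * k) → ℕ) (hy : ∑ i, y i ≤ σ) :
    (y ⟨k - 1, by omega⟩ + 1) * (σ - 2 * k).multichoose (σ - ∑ i, y i) ≤
      Nat.card {b : List ℤ // IsBridge σ b ∧ windowB σ k b = windowOfSteps k y} := by
  have hfin : Finite {b : List ℤ // IsBridge σ b ∧ windowB σ k b = windowOfSteps k y} :=
    Finite.of_injective (fun b => (⟨b.1, b.2.1⟩ : {b : List ℤ // IsBridge σ b}))
      fun b b' h => Subtype.ext (Subtype.mk.inj h)
  set z := zeroExtend y with hz
  have hzk : z (k - 1) = y ⟨k - 1, by omega⟩ := zeroExtend_of_lt _ _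
  have hsum : ∀ g : {g : Fin (σ - 2 * k) → ℕ // ∑ i, g i = σ - ∑ i, y i},
      walk z (k + k) + walk (zeroExtend g.1) (σ - 2 * k) = 0 := by
    intro g
    rw [← two_mul, hz, walk_zeroExtend, walk_zeroExtend, g.2]
    omega
  let Φ : Fin (y ⟨k - 1, by omega⟩ + 1) × {g : Fin (σ - 2 * k) → ℕ // ∑ i, g i = σ - ∑ i, y i} →
      {b : List ℤ // IsBridge σ b ∧ windowB σ k b = windowOfSteps k y} := fun p =>
    ⟨(List.range (σ + 1)).map (walk (gluedSteps σ k z (zeroExtend p.2.1) p.1)),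
      isBridge_map_walk (by
        rw [walk_gluedSteps_last _ _ _ hk hkσ (hsum p.2), hzk]
        have := p.1.2
        omega),
      windowB_map_walk hkσ _ z (fun i hi => walk_gluedSteps_left _ _ _ hi)
        (fun i hi => walk_gluedSteps_right _ _ _ hkσ (hsum p.2) hi)⟩
  have hΦ : Function.Injective Φ := by
    rintro ⟨a, g⟩ ⟨a', g'⟩ h
    have h1 : (List.range (σ + 1)).map (walk (gluedSteps σ k z (zeroExtend g.1) a)) =
      (List.range (σ + 1)).map (walk (gluedSteps σ k z (zeroExtend g'.1) a')) :=
      congrArg Subtype.val h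
    have h2 : ∀ i ≤ σ, walk (gluedSteps σ k z (zeroExtend g.1) a) i =
        walk (gluedSteps σ k z (zeroExtend g'.1) a') i := fun i hi =>
      List.map_inj_left.1 h1 i (List.mem_range.2 (by omega))
    have h3 : ∀ j < σ, gluedSteps σ k z (zeroExtend g.1) a j =
        gluedSteps σ k z (zeroExtend g'.1) a' j := fun j hj => eq_of_walk_eq h2 hj
    have ha := h3 (σ - 1) (by omega)
    rw [gluedSteps, gluedSteps, if_neg (by omega), if_neg (by omega), if_neg (by omega),
      if_neg (by omega), if_neg (by omega), if_neg (by omega)] at ha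
    have hg : g = g' := by
      refine Subtype.ext (funext fun j => ?_)
      have hj := j.2
      have := h3 (k + j) (by omega)
      rwa [gluedSteps, gluedSteps, if_neg (by omega), if_pos (by omega), if_neg (by omega),
        if_pos (by omega), Nat.add_sub_cancel_left, zeroExtend_val, zeroExtend_val] at this
    rw [Fin.ext ha, hg]
  refine le_trans (le_of_eq ?_) (Nat.card_le_card_of_injective Φ hΦ)
  rw [Nat.card_prod, natCard_fin_sum_eq, Nat.card_eq_fintype_card, Fintype.card_fin]

theorem infBridgeLaw_mul_le_bridgeWindowLaw {σ k : ℕ} (hk : 0 < k) (hkσ : 4 * k + 2 ≤ σ)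
    (y : Fin (2 * k) → ℕ) :
    (∏ i, stepWeight k i (y i)) *
        (1 - 2 / σ * (((∑ i, y i : ℕ) : ℝ) - (2 * k + 1 : ℕ)) ^ 2) ≤
      bridgeWindowLaw σ k (windowOfSteps k y) := by
  rw [prod_stepWeight hk]
  set T := ∑ i, y i with hT
  set Y := y ⟨k - 1, by omega⟩ with hY
  have hσ : (0 : ℝ) < σ := by exact_mod_cast (show 0 < σ by omega)
  rcases le_or_gt T σ with h | h
  · have h1 := two_pow_mul_choose_sub_ge σ T (2 * k + 1) h (by omega) (by omega)
    have h2 := natCard_bridges_with_window_ge hk (by omega) y h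
    rw [← hT, ← hY, Nat.multichoose_eq,
      show σ - 2 * k + (σ - T) - 1 = (σ - T) + (σ - (2 * k + 1)) by omega] at h2
    have h2' : ((Y : ℝ) + 1) * (((σ - T) + (σ - (2 * k + 1))).choose (σ - T) : ℝ) ≤
      Nat.card {b : List ℤ // IsBridge σ b ∧ windowB σ k b = windowOfSteps k y} := by
      exact_mod_cast h2
    have h3 : (0 : ℝ) < Nat.card {b : List ℤ // IsBridge σ b} := by
      exact_mod_cast natCard_isBridge_pos σ
    have h4 : (Nat.card {b : List ℤ // IsBridge σ b} : ℝ) ≤ σ.centralBinom := by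
      exact_mod_cast natCard_isBridge_le σ
    have h5 : (0 : ℝ) < σ.centralBinom := h3.trans_le h4
    calc _ ≤ ((Y : ℝ) + 1) * (((σ - T) + (σ - (2 * k + 1))).choose (σ - T) : ℝ) /
          σ.centralBinom := by
          rw [le_div_iff₀ h5]
          have e : (1 - 2 / σ * ((T : ℝ) - (2 * k + 1 : ℕ)) ^ 2) =
            (1 - 2 * ((T : ℝ) - (2 * k + 1 : ℕ)) ^ 2 / σ) := by ring
          rw [e]
          calc _ = ((Y : ℝ) + 1) * ((1 / 2) ^ (T + (2 * k + 1)) *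
                ((1 - 2 * ((T : ℝ) - (2 * k + 1 : ℕ)) ^ 2 / σ) * σ.centralBinom)) := by ring
            _ ≤ ((Y : ℝ) + 1) * ((1 / 2) ^ (T + (2 * k + 1)) * (2 ^ (T + (2 * k + 1)) *
                (((σ - T) + (σ - (2 * k + 1))).choose (σ - T) : ℝ))) := by gcongr
            _ = _ := by
              rw [← mul_assoc ((1 / 2 : ℝ) ^ _), ← mul_pow]
              norm_num
      _ ≤ _ := by
          unfold bridgeWindowLaw
          gcongr
  · refine le_trans (mul_nonpos_of_nonneg_of_nonpos (by positivity) ?_)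
      (bridgeWindowLaw_nonneg _ _ _)
    have h1 : (σ : ℝ) + 1 ≤ T := by exact_mod_cast h
    have h2 : (4 : ℝ) * k + 2 ≤ σ := by exact_mod_cast hkσ
    have h3 : (σ : ℝ) / 2 ≤ (T : ℝ) - (2 * k + 1 : ℕ) := by push_cast; linarith
    have h4 : ((σ : ℝ) / 2) ^ 2 ≤ ((T : ℝ) - (2 * k + 1 : ℕ)) ^ 2 := by gcongr
    have h5 : 2 / (σ : ℝ) * ((σ : ℝ) / 2) ^ 2 ≤
        2 / σ * ((T : ℝ) - (2 * k + 1 : ℕ)) ^ 2 := by gcongr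
    have h6 : 2 / (σ : ℝ) * ((σ : ℝ) / 2) ^ 2 = σ / 2 := by field_simp
    have h7 : (0 : ℝ) ≤ k := by positivity
    linarith

theorem infBridgeLaw_nonneg {k : ℕ} (w : List ℤ) : 0 ≤ infBridgeLaw k w := by
  by_cases hw : w ∈ Set.range (windowOfSteps k)
  · obtain ⟨y, rfl⟩ := hw
    rw [infBridgeLaw_windowOfSteps]
    refine Finset.prod_nonneg fun i _ => ?_
    unfold stepWeight
    split_ifs <;> positivity
  · rw [infBridgeLaw_eq_zero hw]

theorem tsum_abs_sub_le_of_pos {σ k : ℕ} (hk : 0 < k) (hkσ : 4 * k + 2 ≤ σ) :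
    ∑' w : List ℤ, |bridgeWindowLaw σ k w - infBridgeLaw k w| ≤ 4 / σ * (4 * k + 2) := by
  obtain ⟨m0, m2⟩ := hasSum_stepWeight_moments hk
  let F : List ℤ → ℝ := fun w => (((w.getD (2 * k) 0 - w.getD 0 0 : ℤ) : ℝ) - 1) ^ 2
  have hF : ∀ y, F (windowOfSteps k y) = (((∑ i, y i : ℕ) : ℝ) - (2 * k + 1 : ℕ)) ^ 2 := by
    intro y
    have : walk (zeroExtend y) 0 = 0 := by simp [walk]
    simp only [F]
    rw [getD_windowOfSteps y le_rfl, getD_windowOfSteps y (Nat.zero_le _), this, walk_zeroExtend]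
    push_cast
    ring
  have q0 : HasSum (fun w => infBridgeLaw k w) 1 := by
    simpa using (hasSum_infBridgeLaw_mul_iff (k := k) (fun _ => 1) 1).2 (by simpa using m0)
  have q2 : HasSum (fun w => infBridgeLaw k w * F w) (4 * k + 2) :=
    (hasSum_infBridgeLaw_mul_iff F _).2 (by simpa only [hF] using m2)
  have hs := ((hasSum_bridgeWindowLaw σ k).sub q0).add (q2.mul_left (4 / (σ : ℝ)))
  have hle : ∀ w, |bridgeWindowLaw σ k w - infBridgeLaw k w| ≤
      bridgeWindowLaw σ k w - infBridgeLaw k w + 4 / σ * (infBridgeLaw k w * F w) := by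
    intro w
    have hFw : 0 ≤ F w := sq_nonneg _
    have hq := infBridgeLaw_nonneg (k := k) w
    have hp := bridgeWindowLaw_nonneg σ k w
    have h0 : 0 ≤ 4 / (σ : ℝ) * (infBridgeLaw k w * F w) := by positivity
    have key : infBridgeLaw k w * (1 - 2 / σ * F w) ≤ bridgeWindowLaw σ k w := by
      by_cases hw : w ∈ Set.range (windowOfSteps k)
      · obtain ⟨y, rfl⟩ := hw
        rw [infBridgeLaw_windowOfSteps, hF]
        exact infBridgeLaw_mul_le_bridgeWindowLaw hk hkσ y
      · rw [infBridgeLaw_eq_zero hw, zero_mul]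
        exact hp
    rw [abs_le]
    constructor
    · have e : 4 / (σ : ℝ) * (infBridgeLaw k w * F w) =
        2 * (infBridgeLaw k w - infBridgeLaw k w * (1 - 2 / σ * F w)) := by ring
      linarith
    · linarith
  have hsum : Summable fun w => |bridgeWindowLaw σ k w - infBridgeLaw k w| :=
    Summable.of_nonneg_of_le (fun _ => abs_nonneg _) hle hs.summable
  refine (hsum.tsum_le_tsum hle hs.summable).trans_eq ?_
  rw [hs.tsum_eq]
  ring

theorem bridgeWindowLaw_zero_eq (σ : ℕ) (w : List ℤ) :
    bridgeWindowLaw σ 0 w = infBridgeLaw 0 w := by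
  have hwin : ∀ b, IsBridge σ b → windowB σ 0 b = [0] := fun b hb => by
    have h0 : b[0]?.getD 0 = 0 := by
      rw [← List.getD_eq_getElem?_getD]; exact hb.2.1
    simp [windowB, h0]
  have hpos : (Nat.card {b : List ℤ // IsBridge σ b} : ℝ) ≠ 0 := by
    exact_mod_cast (natCard_isBridge_pos σ).ne'
  by_cases hw : w = [0]
  · subst hw
    have : (fun b => IsBridge σ b ∧ windowB σ 0 b = [0]) = IsBridge σ :=
      funext fun b => propext ⟨And.left, fun h => ⟨h, hwin b h⟩⟩
    rw [bridgeWindowLaw, infBridgeLaw]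
    simp only [this]
    rw [div_self hpos]
    simp
  · have hE : IsEmpty {b : List ℤ // IsBridge σ b ∧ windowB σ 0 b = w} :=
      ⟨fun b => hw (b.2.2 ▸ hwin b.1 b.2.1)⟩
    rw [bridgeWindowLaw, infBridgeLaw, Nat.card_of_isEmpty, if_neg]
    · simp
    · rintro ⟨h1, h2⟩
      refine hw (ext_of_getD h1 (n := 2 * 0 + 1) rfl fun i hi => ?_)
      obtain rfl : i = 0 := by omega
      rw [h2]
      rfl

theorem tsum_abs_sub_le {σ k : ℕ} (hkσ : 4 * k + 2 ≤ σ) :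
    ∑' w : List ℤ, |bridgeWindowLaw σ k w - infBridgeLaw k w| ≤ 4 / σ * (4 * k + 2) := by
  rcases Nat.eq_zero_or_pos k with rfl | hk
  · simp only [bridgeWindowLaw_zero_eq, sub_self, abs_zero, tsum_zero]
    positivity
  · exact tsum_abs_sub_le_of_pos hk hkσ

/-- If `σ_n → ∞` and `k_n ≤ σ_n` with `k_n = o(σ_n)`, the total variation distance between the
law of the window `(b_n(σ_n-k_n),...,b_n(σ_n-1),b_n(0),...,b_n(k_n))` of a uniform bridge of
length `σ_n` and the law of the corresponding window of the uniform infinite bridge tends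
to `0` as `n → ∞`. -/
theorem bridge_window_tv (σ k : ℕ → ℕ) (hk : ∀ n, k n ≤ σ n)
    (hσ : Tendsto (fun n => (σ n : ℝ)) atTop atTop)
    (hsmall : Tendsto (fun n => (k n : ℝ) / (σ n : ℝ)) atTop (nhds 0)) :
    Tendsto (fun n => (1 / 2 : ℝ) *
        ∑' w : List ℤ, |bridgeWindowLaw (σ n) (k n) w - infBridgeLaw (k n) w|)
      atTop (nhds 0) := by
  have hbound : Tendsto (fun n => 8 * ((k n : ℝ) / σ n) + 4 / (σ n : ℝ)) atTop (nhds 0) := by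
    simpa using (hsmall.const_mul 8).add (tendsto_const_nhds.div_atTop hσ)
  refine squeeze_zero' (Eventually.of_forall fun n => ?_) ?_ hbound
  · exact mul_nonneg (by norm_num) (tsum_nonneg fun w => abs_nonneg _)
  · filter_upwards [hσ.eventually_ge_atTop 4,
      hsmall.eventually_le_const (show (0 : ℝ) < 1 / 8 by norm_num)] with n h4 h8
    rw [div_le_iff₀ (by linarith)] at h8
    have h : 4 * k n + 2 ≤ σ n := by
      have : (4 : ℝ) * k n + 2 ≤ σ n := by linarith
      exact_mod_cast this
    have := tsum_abs_sub_le h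
    calc _ ≤ 1 / 2 * (4 / (σ n : ℝ) * (4 * k n + 2)) := by gcongr
      _ = _ := by ring
end

section
/- Radon–Nikodym limit for conditioned random-walk counts: let S be simple random walk, let σ_n, a_n, n be integer/real sequences with √n ≪ σ_n ≪ n and a_n ∼ 2√(θn/(3σ_n)) for some θ > 0, and set s_n = ⌊(3/2)s a_n²⌋ for fixed s > 0. If v_n ≤ c a_n⁴ for a fixed constant c, x_n = σ_n − 2s_n, y_n = 2(n − v_n) + σ_n − 2s_n, then P(S(y_n) = x_n)/P(S(2n+σ_n) = σ_n) = exp(2sθ − v_n θ²/((9/4)a_n⁴)) + o(1), uniformly over all admissible v_n ≤ c a_n⁴. -/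
open Filter

/-- The probability that a simple random walk started at `0` (increments uniform on `{-1,+1}`)
is at position `x` after `m` steps, modelled by counting increment sequences. -/
noncomputable def srwProb (m : ℕ) (x : ℤ) : ℝ :=
  (Nat.card {ε : Fin m → ℤ // (∀ i, ε i = 1 ∨ ε i = -1) ∧ ∑ i, ε i = x} : ℝ) / 2 ^ m

/-- The walk with `u` up-steps and `d` down-steps is counted by a binomial coefficient. -/
lemma srwProb_add_sub (u d : ℕ) :
    srwProb (u + d) ((u : ℤ) - d) = ((u + d).choose d : ℝ) / 2 ^ (u + d) := by
  have sum_signs (t : Finset (Fin (u + d))) :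
      ∑ i, (if i ∈ t then (-1 : ℤ) else 1) = u + d - 2 * t.card := by
    have h : ∀ i, (if i ∈ t then (-1 : ℤ) else 1) = 1 - 2 * (if i ∈ t then 1 else 0) := by
      intro i; split_ifs <;> norm_num
    simp only [h, Finset.sum_sub_distrib, ← Finset.mul_sum]
    simp
  have signs_eq (ε : Fin (u + d) → ℤ) (h : ∀ i, ε i = 1 ∨ ε i = -1) :
      (fun i => if i ∈ Finset.univ.filter (fun i => ε i = -1) then (-1 : ℤ) else 1) = ε := by
    funext i
    rcases h i with h | h <;> simp [h]
  have e : {ε : Fin (u + d) → ℤ // (∀ i, ε i = 1 ∨ ε i = -1) ∧ ∑ i, ε i = (u : ℤ) - d} ≃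
      {t : Finset (Fin (u + d)) // t.card = d} :=
    { toFun := fun ε => ⟨Finset.univ.filter (fun i => ε.1 i = -1), by
        have h1 := sum_signs (Finset.univ.filter (fun i => ε.1 i = -1))
        have h2 := congrArg (fun g => ∑ i, g i) (signs_eq ε.1 ε.2.1)
        have h3 := ε.2.2
        simp only at h2
        omega⟩
      invFun := fun t => ⟨fun i => if i ∈ t.1 then -1 else 1, by
        refine ⟨fun i => ?_, ?_⟩
        · dsimp only; split_ifs <;> simp
        · rw [sum_signs, t.2]; ring⟩
      left_inv := fun ε => Subtype.ext (signs_eq ε.1 ε.2.1)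
      right_inv := fun t => by
        apply Subtype.ext
        ext i
        by_cases h : i ∈ t.1 <;> simp [h] }
  rw [srwProb, Nat.card_congr e, Nat.card_eq_fintype_card, Fintype.card_finset_len,
    Fintype.card_fin]

lemma srwProb_add_sub_pos (u d : ℕ) : 0 < srwProb (u + d) ((u : ℤ) - d) := by
  rw [srwProb_add_sub]
  have : 0 < (u + d).choose d := Nat.choose_pos (Nat.le_add_left _ _)
  positivity

lemma srwProb_pos_of_eq {m u d : ℕ} {x : ℤ} (hm : m = u + d) (hx : x = u - d) :
    0 < srwProb m x := by
  subst hm hx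
  exact srwProb_add_sub_pos u d

/-- Removing one up-step. -/
lemma srwProb_remove_up (u d : ℕ) :
    srwProb (u + d) ((u : ℤ) - d) =
      srwProb (u + 1 + d) (((u + 1 : ℕ) : ℤ) - d) * (2 * (u + 1) / (u + 1 + d)) := by
  rw [srwProb_add_sub, srwProb_add_sub]
  have h : (u + d).choose d * (u + d + 1) = (u + 1 + d).choose d * (u + 1) := by
    have := Nat.choose_mul_succ_eq (u + d) d
    rwa [show u + d + 1 - d = u + 1 by omega, show (u + d + 1).choose d = (u + 1 + d).choose d by
      congr 1; omega] at this
  have hcast : ((u + d).choose d : ℝ) * (u + d + 1) = (u + 1 + d).choose d * (u + 1) := by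
    exact_mod_cast h
  rw [show u + 1 + d = (u + d) + 1 by ring] at *
  field_simp
  rw [pow_succ]
  linear_combination (2 ^ (u + d) * 2) * hcast

/-- Removing one down-step. -/
lemma srwProb_remove_down (u d : ℕ) :
    srwProb (u + d) ((u : ℤ) - d) =
      srwProb (u + (d + 1)) ((u : ℤ) - (d + 1 : ℕ)) * (2 * (d + 1) / (u + 1 + d)) := by
  rw [srwProb_add_sub, srwProb_add_sub]
  have h := Nat.add_one_mul_choose_eq (u + d) d
  have hcast : ((u : ℝ) + d + 1) * (u + d).choose d = (u + d + 1).choose (d + 1) * (d + 1) := by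
    exact_mod_cast h
  rw [show u + (d + 1) = (u + d) + 1 by ring]
  field_simp
  rw [pow_succ]
  linear_combination (2 ^ (u + d) * 2) * hcast

/-- Removing one up-step and one down-step. -/
lemma srwProb_remove_pair (u d : ℕ) :
    srwProb (u + d) ((u : ℤ) - d) =
      srwProb (u + 1 + (d + 1)) (((u + 1 : ℕ) : ℤ) - (d + 1 : ℕ)) *
        (4 * (u + 1) * (d + 1) / ((u + d + 2) * (u + d + 1))) := by
  rw [srwProb_remove_up, srwProb_remove_down (u + 1) d]
  push_cast
  field_simp
  ring

lemma abs_sub_sub_mul_le_of_forall_lt {g : ℕ → ℝ} {α β : ℝ} (k : ℕ)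
    (h : ∀ i < k, |g (i + 1) - g i - α| ≤ β) : |g k - g 0 - k * α| ≤ k * β := by
  induction k with
  | zero => simp
  | succ k ih =>
    have h1 := ih fun i hi => h i (by omega)
    have h2 := h k (by omega)
    push_cast
    rw [abs_le] at *
    constructor <;> linarith [h1.1, h1.2, h2.1, h2.2]

lemma abs_log_sub_le {x α β : ℝ} (hx : 0 < x) (h1 : |x - 1 - α| ≤ β)
    (h2 : |1 - x⁻¹ - α| ≤ β) : |Real.log x - α| ≤ β := by
  have := Real.log_le_sub_one_of_pos hx
  have := Real.one_sub_inv_le_log_of_pos hx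
  rw [abs_le] at *
  constructor <;> linarith [h1.1, h1.2, h2.1, h2.2]

lemma abs_sub_div_add_sq_div_le {N S δ m D : ℝ} (hN : 0 < N) (hδ : 0 < δ) (hδ' : δ ≤ 1 / 10)
    (hNS : N ≤ δ * S ^ 2) (hm : |m - 2 * N| ≤ δ * N) (hD : |D - 4 * N ^ 2| ≤ 6 * δ * N ^ 2) :
    |(m - S ^ 2) / D + S ^ 2 / (4 * N ^ 2)| ≤ 5 * δ * (S ^ 2 / N ^ 2) := by
  rw [abs_le] at hm hD
  have hN2 : 0 < N ^ 2 := by positivity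
  have hDN : N ^ 2 ≤ D := by nlinarith
  have hDpos : 0 < D := by linarith
  have hδN : δ * N ≤ N / 10 := by nlinarith
  have e : (m - S ^ 2) / D + S ^ 2 / (4 * N ^ 2)
      = m / D + S ^ 2 / N ^ 2 * ((D - 4 * N ^ 2) / (4 * D)) := by
    field_simp; ring
  rw [e]
  have b1 : |m / D| ≤ 3 * δ * (S ^ 2 / N ^ 2) := by
    rw [abs_of_nonneg (div_nonneg (by linarith) hDpos.le)]
    calc m / D ≤ 3 * N / N ^ 2 := by
          apply div_le_div₀ <;> linarith
      _ ≤ 3 * (δ * S ^ 2) / N ^ 2 := by gcongr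
      _ = _ := by ring
  have b2 : |(D - 4 * N ^ 2) / (4 * D)| ≤ 2 * δ := by
    rw [abs_div, abs_of_pos (show 0 < 4 * D by linarith), div_le_iff₀ (by linarith), abs_le]
    constructor <;> nlinarith
  calc _ ≤ |m / D| + S ^ 2 / N ^ 2 * |(D - 4 * N ^ 2) / (4 * D)| := by
        refine (abs_add_le _ _).trans ?_
        rw [abs_mul, abs_of_nonneg (show 0 ≤ S ^ 2 / N ^ 2 by positivity)]
    _ ≤ 3 * δ * (S ^ 2 / N ^ 2) + S ^ 2 / N ^ 2 * (2 * δ) := by gcongr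
    _ = _ := by ring

/-- The logarithm of the factor gained by removing a pair of opposite steps. -/
lemma abs_log_pair_factor_le {N S δ m : ℝ} (hN : 0 < N) (hS : 0 < S) (hδ : 0 < δ)
    (hδ' : δ ≤ 1 / 10) (hNS : N ≤ δ * S ^ 2) (hSN : S ≤ δ * N) (hm : |m - 2 * N| ≤ δ * N) :
    |Real.log ((m ^ 2 - S ^ 2) / (m * (m - 1))) - -(S ^ 2 / (4 * N ^ 2))|
      ≤ 5 * δ * (S ^ 2 / N ^ 2) := by
  have hm' := abs_le.1 hm
  have hδN : δ * N ≤ N / 10 := by nlinarith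
  have hS2 : S ^ 2 ≤ δ ^ 2 * N ^ 2 := by
    rw [← mul_pow]; exact pow_le_pow_left₀ hS.le hSN 2
  have hone : 100 ≤ δ * N := by
    have h3 : N * 1 ≤ N * (δ ^ 3 * N) := by
      calc N * 1 ≤ δ * S ^ 2 := by linarith
        _ ≤ δ * (δ ^ 2 * N ^ 2) := by gcongr
        _ = _ := by ring
    have h4 := le_of_mul_le_mul_left h3 hN
    have h5 : δ ^ 2 ≤ 1 / 100 := by nlinarith
    have h6 : δ ^ 2 * (δ * N) ≤ 1 / 100 * (δ * N) := by gcongr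
    nlinarith
  have hS2' : S ^ 2 ≤ δ * N ^ 2 / 10 := by nlinarith [sq_nonneg N, mul_pos hδ (sq_pos_of_pos hN)]
  have hmsq : |m ^ 2 - 4 * N ^ 2| ≤ 5 * δ * N ^ 2 := by
    have : m ^ 2 - 4 * N ^ 2 = (m - 2 * N) * (m + 2 * N) := by ring
    rw [this, abs_mul, abs_of_pos (show 0 < m + 2 * N by linarith)]
    calc _ ≤ δ * N * (5 * N) := by
          apply mul_le_mul hm <;> linarith
      _ = _ := by ring
  have hmle : m ≤ δ * N ^ 2 / 10 := by nlinarith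
  rw [abs_le] at hmsq
  have hN2 : 0 < δ * N ^ 2 := by positivity
  have hδN2 : δ * N ^ 2 ≤ N ^ 2 / 10 := by nlinarith
  have hp1 : 0 < m * (m - 1) := by nlinarith
  have hp2 : 0 < m ^ 2 - S ^ 2 := by nlinarith
  apply abs_log_sub_le (div_pos hp2 hp1)
  · have e : (m ^ 2 - S ^ 2) / (m * (m - 1)) - 1 - -(S ^ 2 / (4 * N ^ 2))
        = (m - S ^ 2) / (m * (m - 1)) + S ^ 2 / (4 * N ^ 2) := by
      rw [div_sub_one hp1.ne']; ring
    rw [e]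
    apply abs_sub_div_add_sq_div_le hN hδ hδ' hNS hm
    rw [abs_le]; constructor <;> nlinarith
  · have e : 1 - ((m ^ 2 - S ^ 2) / (m * (m - 1)))⁻¹ - -(S ^ 2 / (4 * N ^ 2))
        = (m - S ^ 2) / (m ^ 2 - S ^ 2) + S ^ 2 / (4 * N ^ 2) := by
      rw [inv_div, one_sub_div hp2.ne']; ring
    rw [e]
    apply abs_sub_div_add_sq_div_le hN hδ hδ' hNS hm
    rw [abs_le]; constructor <;> nlinarith

lemma abs_div_sub_div_le {N S δ k D : ℝ} (hN : 0 < N) (hS : 0 < S) (hδ : 0 < δ)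
    (hδ' : δ ≤ 1 / 10) (hk : |k - S| ≤ δ * S) (hD : |D - 2 * N| ≤ 3 * δ * N) :
    |k / D - S / (2 * N)| ≤ 3 * δ * (S / N) := by
  rw [abs_le] at hk hD
  have hδN : δ * N ≤ N / 10 := by nlinarith
  have hDpos : N ≤ D := by nlinarith
  have hD0 : 0 < D := by linarith
  have e : k / D - S / (2 * N) = (2 * N * (k - S) - S * (D - 2 * N)) / (2 * N * D) := by
    field_simp; ring
  have hSN : 0 < S * N := by positivity
  have h1 := mul_le_mul_of_nonneg_left hk.1 hN.le
  have h2 := mul_le_mul_of_nonneg_left hk.2 hN.le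
  have h3 := mul_le_mul_of_nonneg_left hD.1 hS.le
  have h4 := mul_le_mul_of_nonneg_left hD.2 hS.le
  have e2 : 3 * δ * (S / N) * (2 * N * D) = 6 * δ * S * D := by field_simp; ring
  have h5 : 6 * δ * S * N ≤ 6 * δ * S * D := by gcongr
  have h6 : 0 < δ * S * N := by positivity
  rw [e, abs_div, abs_of_pos (show 0 < 2 * N * D by positivity), div_le_iff₀ (by positivity), e2,
    abs_le]
  constructor <;> nlinarith

/-- The logarithm of the factor gained by removing an up-step. -/
lemma abs_log_up_factor_le {N S δ k m : ℝ} (hN : 0 < N) (hS : 0 < S) (hδ : 0 < δ)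
    (hδ' : δ ≤ 1 / 10) (hSN : S ≤ δ * N) (hk : |k - S| ≤ δ * S) (hm : |m - 2 * N| ≤ δ * N) :
    |Real.log ((m + k) / m) - S / (2 * N)| ≤ 3 * δ * (S / N) := by
  have hk' := abs_le.1 hk
  have hm' := abs_le.1 hm
  have hδN : δ * N ≤ N / 10 := by nlinarith
  have hδS : δ * S ≤ S / 10 := by nlinarith
  have hp1 : 0 < m := by linarith
  have hp2 : 0 < m + k := by linarith
  apply abs_log_sub_le (div_pos hp2 hp1)
  · rw [div_sub_one hp1.ne', add_sub_cancel_left]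
    apply abs_div_sub_div_le hN hS hδ hδ' hk
    rw [abs_le]; constructor <;> linarith
  · rw [inv_div, one_sub_div hp2.ne', add_sub_cancel_left]
    apply abs_div_sub_div_le hN hS hδ hδ' hk
    rw [abs_le]; constructor <;> linarith

/-- Quantitative expansion of the logarithm of the ratio of two walk probabilities. -/
lemma abs_log_srwProb_ratio_le {n σ v t : ℕ} {δ : ℝ} (hn : 0 < n) (hσ : 0 < σ) (hδ : 0 < δ)
    (hδ' : δ ≤ 1 / 10) (hNS : (n : ℝ) ≤ δ * σ ^ 2) (hSN : (σ : ℝ) ≤ δ / 4 * n)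
    (hv : (v : ℝ) ≤ δ / 8 * n) (ht : (2 * t : ℝ) ≤ δ * σ) :
    |Real.log (srwProb (2 * (n - v) + σ - 2 * t) ((σ : ℤ) - 2 * (t : ℤ)) /
        srwProb (2 * n + σ) (σ : ℤ)) - (t * σ / n - v * σ ^ 2 / (4 * n ^ 2))|
      ≤ 5 * δ * (v * σ ^ 2 / n ^ 2) + 6 * δ * (t * σ / n) := by
  have hN : (0 : ℝ) < n := by exact_mod_cast hn
  have hS : (0 : ℝ) < σ := by exact_mod_cast hσ
  have hδN : δ * n ≤ n / 10 := by nlinarith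
  have hδS : δ * σ ≤ σ / 10 := by nlinarith
  have hSN' : (σ : ℝ) ≤ δ * n := by linarith
  have hvn : v ≤ n := by
    have : (v : ℝ) ≤ n := by linarith
    exact_mod_cast this
  have htσ : 2 * t ≤ σ := by
    have : (2 * t : ℝ) ≤ σ := by linarith
    exact_mod_cast this
  let F : ℕ → ℕ → ℝ := fun u d => srwProb (u + d) ((u : ℤ) - d)
  have hF : ∀ u d, 0 < F u d := srwProb_add_sub_pos
  have e1 : srwProb (2 * (n - v) + σ - 2 * t) ((σ : ℤ) - 2 * (t : ℤ))
      = F (n - v + σ - 2 * t) (n - v) := by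
    simp only [F]
    congr 1 <;> omega
  have e2 : srwProb (2 * n + σ) (σ : ℤ) = F (n + σ) n := by
    simp only [F]
    congr 1
    · omega
    · push_cast; ring
  have pairs := abs_sub_sub_mul_le_of_forall_lt (g := fun i => Real.log (F (n - i + σ) (n - i)))
    (α := -((σ : ℝ) ^ 2 / (4 * n ^ 2))) (β := 5 * δ * ((σ : ℝ) ^ 2 / n ^ 2)) v (by
    intro i hi
    obtain ⟨p, hp⟩ : ∃ p, n = p + 1 + i := ⟨n - 1 - i, by omega⟩
    have hi' : (i : ℝ) + 1 ≤ v := by exact_mod_cast hi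
    have hp' : (n : ℝ) = p + 1 + i := by exact_mod_cast hp
    have r := srwProb_remove_pair (p + σ) p
    have r' : F (p + σ) p = F (p + 1 + σ) (p + 1) *
        (4 * ((p + σ : ℕ) + 1) * (p + 1) / (((p + σ : ℕ) + p + 2) * ((p + σ : ℕ) + p + 1))) := by
      rw [show p + 1 + σ = p + σ + 1 by ring]; exact r
    have key := abs_log_pair_factor_le (m := 2 * p + 2 + σ) hN hS hδ hδ' hNS hSN' (by
      rw [abs_le]; constructor <;> linarith)
    rw [show n - (i + 1) = p by omega, show n - i = p + 1 by omega, r',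
      Real.log_mul (hF _ _).ne' (by positivity), add_sub_cancel_left]
    convert key using 5
    · push_cast; ring
    · push_cast; ring)
  have ups := abs_sub_sub_mul_le_of_forall_lt
    (g := fun j => Real.log (F (n - v + σ - j) (n - v)))
    (α := (σ : ℝ) / (2 * n)) (β := 3 * δ * ((σ : ℝ) / n)) (2 * t) (by
    intro j hj
    obtain ⟨q, hq⟩ : ∃ q, σ = q + 1 + j := ⟨σ - 1 - j, by omega⟩
    obtain ⟨d, hd⟩ : ∃ d, n = d + v := ⟨n - v, by omega⟩
    have hj' : (j : ℝ) + 1 ≤ 2 * t := by exact_mod_cast hj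
    have hq' : (σ : ℝ) = q + 1 + j := by exact_mod_cast hq
    have hd' : (n : ℝ) = d + v := by exact_mod_cast hd
    have hj0 : (0 : ℝ) ≤ j := by positivity
    have hq0 : (0 : ℝ) ≤ q := by positivity
    have hv0 : (0 : ℝ) ≤ v := by positivity
    have r : F (d + q) d = F (d + q + 1) d *
        (2 * ((d + q : ℕ) + 1) / ((d + q : ℕ) + 1 + d)) := srwProb_remove_up (d + q) d
    have key := abs_log_up_factor_le (m := 2 * d + q + 1) (k := q + 1) hN hS hδ hδ' hSN' (by
      rw [abs_le]; constructor <;> linarith) (by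
      rw [abs_le]; constructor <;> linarith)
    rw [show n - v = d by omega, show d + σ - (j + 1) = d + q by omega,
      show d + σ - j = d + q + 1 by omega, r, Real.log_mul (hF _ _).ne' (by positivity),
      add_sub_cancel_left]
    convert key using 4
    congr 1 <;> push_cast <;> ring)
  rw [e1, e2, Real.log_div (hF _ _).ne' (hF _ _).ne']
  simp only [Nat.sub_zero] at pairs ups
  push_cast at pairs ups
  rw [abs_le] at *
  have q1 : (2 * t : ℝ) * (σ / (2 * n)) = t * σ / n := by field_simp
  have q2 : (2 * t : ℝ) * (3 * δ * (σ / n)) = 6 * δ * (t * σ / n) := by ring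
  have q3 : (v : ℝ) * -((σ : ℝ) ^ 2 / (4 * n ^ 2)) = -(v * σ ^ 2 / (4 * n ^ 2)) := by ring
  have q4 : (v : ℝ) * (5 * δ * ((σ : ℝ) ^ 2 / n ^ 2)) = 5 * δ * (v * σ ^ 2 / n ^ 2) := by ring
  rw [q1, q2] at ups
  rw [q3, q4] at pairs
  constructor <;> linarith [pairs.1, pairs.2, ups.1, ups.2]

/-- If `log r` is close to `y ≤ M`, then `r` is close to `exp y`. -/
lemma abs_sub_exp_le {r y M η : ℝ} (hr : 0 < r) (hy : y ≤ M) (h : |Real.log r - y| ≤ η)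
    (hη : η ≤ 1) : |r - Real.exp y| ≤ Real.exp M * (2 * η) := by
  have e : r - Real.exp y = Real.exp y * (Real.exp (Real.log r - y) - 1) := by
    rw [Real.exp_sub, Real.exp_log hr]
    field_simp
  rw [e, abs_mul, abs_of_pos (Real.exp_pos _)]
  have := Real.abs_exp_sub_one_le (h.trans hη)
  gcongr
  linarith

theorem conditioned_walk_rn_limit (θ s c : ℝ) (hθ : 0 < θ) (hs : 0 < s) (hc : 0 < c)
    (σ : ℕ → ℕ) (a : ℕ → ℝ) (hpos : ∀ n, 0 < σ n)
    (h1 : Tendsto (fun n : ℕ => Real.sqrt n / (σ n : ℝ)) atTop (nhds 0))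
    (h2 : Tendsto (fun n : ℕ => (σ n : ℝ) / n) atTop (nhds 0))
    (h3 : Tendsto (fun n : ℕ => a n / (2 * Real.sqrt (θ * n / (3 * σ n)))) atTop (nhds 1)) :
    ∀ ε : ℝ, 0 < ε → ∀ᶠ n in atTop, ∀ v : ℕ, (v : ℝ) ≤ c * a n ^ 4 →
      |srwProb (2 * (n - v) + σ n - 2 * ⌊3 / 2 * s * a n ^ 2⌋₊)
            ((σ n : ℤ) - 2 * (⌊3 / 2 * s * a n ^ 2⌋₊ : ℤ))
          / srwProb (2 * n + σ n) (σ n : ℤ)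
        - Real.exp (2 * s * θ - v * θ ^ 2 / (9 / 4 * a n ^ 4))| ≤ ε := by
  intro ε hε
  have hS : ∀ n, (0 : ℝ) < σ n := fun n => by exact_mod_cast hpos n
  have lim_nS : Tendsto (fun n : ℕ => (n : ℝ) / (σ n : ℝ) ^ 2) atTop (nhds 0) := by
    have := h1.pow 2
    simpa [div_pow, Real.sq_sqrt] using this
  have lim_a2 : Tendsto (fun n : ℕ => a n ^ 2 * σ n / n) atTop (nhds (4 * θ / 3)) := by
    have := (h3.pow 2).const_mul (4 * θ / 3)
    rw [one_pow, mul_one] at this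
    refine this.congr' ?_
    filter_upwards [eventually_gt_atTop 0] with n hn
    have hn' : (0 : ℝ) < n := by exact_mod_cast hn
    have := hS n
    rw [div_pow, mul_pow, Real.sq_sqrt (by positivity)]
    field_simp
    ring
  have lim_a4 : Tendsto (fun n : ℕ => a n ^ 4 * (σ n : ℝ) ^ 2 / (n : ℝ) ^ 2) atTop
      (nhds (16 * θ ^ 2 / 9)) := by
    have := lim_a2.pow 2
    rw [show (4 * θ / 3) ^ 2 = 16 * θ ^ 2 / 9 by ring] at this
    refine this.congr fun n => ?_
    ring
  have lim_a4n : Tendsto (fun n : ℕ => a n ^ 4 / n) atTop (nhds 0) := by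
    have := lim_a4.mul lim_nS
    rw [mul_zero] at this
    refine this.congr' ?_
    filter_upwards [eventually_gt_atTop 0] with n hn
    have hn' : (0 : ℝ) < n := by exact_mod_cast hn
    have := hS n
    field_simp
  have lim_t : Tendsto (fun n : ℕ => (⌊3 / 2 * s * a n ^ 2⌋₊ : ℝ) * σ n / n) atTop
      (nhds (2 * s * θ)) := by
    have hup := lim_a2.const_mul (3 / 2 * s)
    have hlow := hup.sub h2
    rw [show 3 / 2 * s * (4 * θ / 3) = 2 * s * θ by ring] at hup
    rw [show 3 / 2 * s * (4 * θ / 3) - 0 = 2 * s * θ by ring] at hlow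
    refine tendsto_of_tendsto_of_tendsto_of_le_of_le hlow hup (fun n => ?_) (fun n => ?_)
    · have h : 3 / 2 * s * a n ^ 2 - 1 ≤ ⌊3 / 2 * s * a n ^ 2⌋₊ := (Nat.sub_one_lt_floor _).le
      have := mul_le_mul_of_nonneg_right h (show (0 : ℝ) ≤ σ n / n by positivity)
      calc _ = (3 / 2 * s * a n ^ 2 - 1) * ((σ n : ℝ) / n) := by ring
        _ ≤ _ := this
        _ = _ := by ring
    · have h : (⌊3 / 2 * s * a n ^ 2⌋₊ : ℝ) ≤ 3 / 2 * s * a n ^ 2 := Nat.floor_le (by positivity)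
      have := mul_le_mul_of_nonneg_right h (show (0 : ℝ) ≤ σ n / n by positivity)
      calc _ = (⌊3 / 2 * s * a n ^ 2⌋₊ : ℝ) * ((σ n : ℝ) / n) := by ring
        _ ≤ _ := this
        _ = _ := by ring
  have lim_tS : Tendsto (fun n : ℕ => (⌊3 / 2 * s * a n ^ 2⌋₊ : ℝ) / σ n) atTop (nhds 0) := by
    have := lim_t.mul lim_nS
    rw [mul_zero] at this
    refine this.congr' ?_
    filter_upwards [eventually_gt_atTop 0] with n hn
    have hn' : (0 : ℝ) < n := by exact_mod_cast hn
    have := hS n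
    field_simp
  obtain ⟨η, hη, hη1, hηε⟩ : ∃ η : ℝ, 0 < η ∧ η ≤ 1 ∧ Real.exp (2 * s * θ) * (2 * η) ≤ ε := by
    refine ⟨min 1 (ε / (2 * Real.exp (2 * s * θ))), by positivity, min_le_left _ _, ?_⟩
    calc _ ≤ Real.exp (2 * s * θ) * (2 * (ε / (2 * Real.exp (2 * s * θ)))) := by
          gcongr; exact min_le_right _ _
      _ = ε := by field_simp
  set A := 5 * (c * (16 * θ ^ 2 / 9 + 1)) + 6 * (2 * s * θ + 1) with hA
  have hApos : 0 < A := by positivity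
  obtain ⟨δ, hδ, hδ', hδA⟩ : ∃ δ : ℝ, 0 < δ ∧ δ ≤ 1 / 10 ∧ δ * A ≤ η / 3 := by
    refine ⟨min (1 / 10) (η / (3 * A)), by positivity, min_le_left _ _, ?_⟩
    calc _ ≤ η / (3 * A) * A := by gcongr; exact min_le_right _ _
      _ = η / 3 := by field_simp
  filter_upwards [eventually_gt_atTop 0,
    lim_nS.eventually_le_const hδ,
    h2.eventually_le_const (show (0 : ℝ) < δ / 4 by positivity),
    lim_a4n.eventually_le_const (show (0 : ℝ) < δ / (8 * c) by positivity),
    lim_tS.eventually_le_const (show (0 : ℝ) < δ / 2 by positivity),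
    lim_t.eventually_le_const (show 2 * s * θ < 2 * s * θ + 1 by linarith),
    lim_a4.eventually_le_const (show 16 * θ ^ 2 / 9 < 16 * θ ^ 2 / 9 + 1 by linarith),
    lim_a4.eventually_const_lt (show 0 < 16 * θ ^ 2 / 9 by positivity),
    Metric.tendsto_nhds.1 lim_t (η / 3) (by positivity),
    Metric.tendsto_nhds.1 lim_a4 (4 * η / (3 * c)) (by positivity)]
    with n hn hnS hSn han htS htle hale hagt htclose haclose v hv
  have hN : (0 : ℝ) < n := by exact_mod_cast hn
  have hSn' := hS n
  have ha4 : 0 < a n ^ 4 := by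
    by_contra hneg
    have h0 : a n ^ 4 = 0 := le_antisymm (not_lt.1 hneg) (by positivity)
    simp [h0] at hagt
  set t := ⌊3 / 2 * s * a n ^ 2⌋₊ with ht
  rw [div_le_iff₀ (by positivity)] at hnS hSn han htS
  have hv' : (v : ℝ) ≤ δ / 8 * n := by
    calc (v : ℝ) ≤ c * a n ^ 4 := hv
      _ ≤ c * (δ / (8 * c) * n) := by gcongr
      _ = _ := by field_simp
  have key := abs_log_srwProb_ratio_le hn (hpos n) hδ hδ' hnS hSn hv' (t := t) (by linarith)
  have hvS : (v : ℝ) * (σ n : ℝ) ^ 2 / (n : ℝ) ^ 2 ≤ c * (16 * θ ^ 2 / 9 + 1) := by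
    calc (v : ℝ) * (σ n : ℝ) ^ 2 / (n : ℝ) ^ 2 ≤ c * a n ^ 4 * (σ n : ℝ) ^ 2 / (n : ℝ) ^ 2 := by
          gcongr
      _ = c * (a n ^ 4 * (σ n : ℝ) ^ 2 / (n : ℝ) ^ 2) := by ring
      _ ≤ _ := by gcongr
  have err1 : 5 * δ * (v * (σ n : ℝ) ^ 2 / n ^ 2) + 6 * δ * (t * σ n / n) ≤ η / 3 := by
    refine le_trans ?_ hδA
    rw [hA]
    have i1 := mul_le_mul_of_nonneg_left hvS hδ.le
    have i2 := mul_le_mul_of_nonneg_left htle hδ.le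
    linarith
  have err2 : |v * (σ n : ℝ) ^ 2 / (4 * n ^ 2) - v * θ ^ 2 / (9 / 4 * a n ^ 4)| ≤ η / 3 := by
    have e : v * (σ n : ℝ) ^ 2 / (4 * n ^ 2) - v * θ ^ 2 / (9 / 4 * a n ^ 4)
        = v / a n ^ 4 * (1 / 4) * (a n ^ 4 * (σ n : ℝ) ^ 2 / n ^ 2 - 16 * θ ^ 2 / 9) := by
      have := ha4.ne'
      generalize a n ^ 4 = b at *
      field_simp
      ring
    rw [Real.dist_eq] at haclose
    rw [e, abs_mul, abs_of_nonneg (by positivity)]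
    have : (v : ℝ) / a n ^ 4 ≤ c := by rwa [div_le_iff₀ ha4]
    calc _ ≤ c * (1 / 4) * (4 * η / (3 * c)) := by gcongr
      _ = η / 3 := by field_simp
  rw [Real.dist_eq] at htclose
  refine le_trans (abs_sub_exp_le ?_ (M := 2 * s * θ) ?_ (η := η) ?_ hη1) hηε
  · have h2t : 2 * t ≤ σ n := by
      have : (2 * t : ℝ) ≤ σ n := by nlinarith
      exact_mod_cast this
    have hvn : v ≤ n := by
      have : (v : ℝ) ≤ n := by nlinarith
      exact_mod_cast this
    apply div_pos
    · exact srwProb_pos_of_eq (u := n - v + σ n - 2 * t) (d := n - v) (by omega) (by omega)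
    · exact srwProb_pos_of_eq (u := n + σ n) (d := n) (by omega) (by omega)
  · have : 0 ≤ v * θ ^ 2 / (9 / 4 * a n ^ 4) := by positivity
    linarith
  · rw [abs_le] at *
    rw [abs_lt] at htclose
    constructor <;> linarith [key.1, key.2, err2.1, err2.2, htclose.1, htclose.2]
end
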